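/- Let X = Spec(B) be given by a local presentation attached to the multiplicity as in the context, with elimination algebra G_X^{(d)} over S and closed point ξ. Then there exist a field extension K of k and an arc φ : B → K[[t]] in X through ξ (with all φ(θ_i) and φ(z_j) nonzero) such that r_{X,φ}/ord(φ) = ord(G_X^{(d)}). -/

import Mathlib

open Polynomial
open scoped ENNReal

noncomputable section

namespace NashMult

/-- The `m`-adic order `ν(f)` of an element `f` of a ring: the largest `n` with `f ∈ m ^ n`. -/
def adicOrder {R : Type*} [CommRing R] (m : Ideal R) (f : R) : ℕ :=
  sSup {n : ℕ | f ∈ m ^ n}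

/-- A subalgebra `G ⊆ R[W]` is *graded* if it is spanned by its "monomials", i.e. it is closed
under taking homogeneous components.  This is the condition expressing that `G = ⊕ I_l W^l`
for a family of ideals `I_l` (with `I_0 = R` and `I_i · I_j ⊆ I_{i+j}` automatic). -/
def Graded {R : Type*} [CommRing R] (G : Subalgebra R (Polynomial R)) : Prop :=
  ∀ p ∈ G, ∀ n : ℕ, (C (p.coeff n) * X ^ n : Polynomial R) ∈ G

/-- A *Rees algebra* over `R`: a finitely generated graded subalgebra of `R[W]`. -/
def IsReesAlgebra {R : Type*} [CommRing R] (G : Subalgebra R (Polynomial R)) : Prop :=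
  G.FG ∧ Graded G

/-- The order of (the Rees algebra) `G` at the closed point of the local ring `(R, m)`:
`ord(G) = inf { ν(f)/n : f W^n a homogeneous element of G, n ≥ 1, f ≠ 0 }`
(with value `∞` for the empty infimum). -/
def reesOrder {R : Type*} [CommRing R] (m : Ideal R) (G : Subalgebra R (Polynomial R)) : ℝ≥0∞ :=
  sInf {q : ℝ≥0∞ | ∃ (f : R) (n : ℕ), f ≠ 0 ∧ 1 ≤ n ∧ (C f * X ^ n : Polynomial R) ∈ G ∧
    q = (adicOrder m f : ℝ≥0∞) / (n : ℝ≥0∞)}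

/-- `G = ⊕ I_l W^l` is *differentially closed* relative to a family `D` of derivations if
`I_{l+1} ⊆ I_l` and `D_j (I_l) ⊆ I_{l-1}` for all `l ≥ 1` and all `j`. -/
def DiffClosed {k R ι : Type*} [CommRing k] [CommRing R] [Algebra k R]
    (D : ι → Derivation k R R) (G : Subalgebra R (Polynomial R)) : Prop :=
  (∀ (f : R) (l : ℕ), 1 ≤ l → (C f * X ^ (l + 1) : Polynomial R) ∈ G →
      (C f * X ^ l : Polynomial R) ∈ G) ∧
  (∀ (f : R) (l : ℕ) (j : ι), (C f * X ^ (l + 1) : Polynomial R) ∈ G →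
      (C (D j f) * X ^ l : Polynomial R) ∈ G)

/-- `Diff(M)`: the smallest graded differentially closed subalgebra of `R[W]` containing the
set `M`. -/
def diffClosure {k R ι : Type*} [CommRing k] [CommRing R] [Algebra k R]
    (D : ι → Derivation k R R) (M : Set (Polynomial R)) : Subalgebra R (Polynomial R) :=
  sInf {G : Subalgebra R (Polynomial R) | M ⊆ ↑G ∧ Graded G ∧ DiffClosed D G}

/-- The image `ψ(G)` of a Rees algebra `G` over `R` under a homomorphism (arc) `ψ : R → K⟦t⟧`:
the Rees algebra over `K⟦t⟧` generated by all `ψ(g) W^l` for `g W^l` a homogeneous element of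
`G` with `ψ(g) ≠ 0`. -/
def arcImage {R A : Type*} [CommRing R] [CommRing A] (ψ : R → A)
    (G : Subalgebra R (Polynomial R)) : Subalgebra A (Polynomial A) :=
  Algebra.adjoin A {p : Polynomial A | ∃ (g : R) (l : ℕ),
    (C g * X ^ l : Polynomial R) ∈ G ∧ ψ g ≠ 0 ∧ p = C (ψ g) * X ^ l}

/-- The order `ord(ψ)` of an arc `ψ : R → K⟦t⟧`: the largest `n` such that
`ψ(m) ⊆ t^n` (`t` being the ideal `tI`). -/
def homOrd {R A : Type*} [CommRing R] [CommRing A] (m : Ideal R) (tI : Ideal A)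
    (ψ : R → A) : ℕ :=
  sSup {n : ℕ | ∀ s ∈ m, ψ s ∈ tI ^ n}

/-- The maximal ideal `(t)` of `K⟦t⟧`. -/
def tId (K : Type*) [CommRing K] : Ideal (PowerSeries K) :=
  Ideal.span {(PowerSeries.X : PowerSeries K)}

/-- The `t`-adic order on `K⟦t⟧`. -/
def tOrd {K : Type*} [CommRing K] (g : PowerSeries K) : ℕ :=
  adicOrder (tId K) g

/-- The family of ideals `I_l` of the graded algebra `G = ⊕ I_l W^l`. -/
def idealFam {R : Type*} [CommRing R] (G : Subalgebra R (Polynomial R)) (l : ℕ) : Ideal R :=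
  Submodule.comap (Polynomial.monomial l : R →ₗ[R] Polynomial R) (Subalgebra.toSubmodule G)

/-- The closed point of the local ring `(R, m)` belongs to the singular locus of
`G = ⊕ I_l W^l`, i.e. `ν(I_l) ≥ l` for all `l ≥ 1`. -/
def SingFam {R : Type*} [CommRing R] (m : Ideal R) (I : ℕ → Ideal R) : Prop :=
  ∀ l : ℕ, 1 ≤ l → I l ≤ m ^ l

/-- The transform `⊕ (I_l · T^{-l}) W^l` of a Rees algebra `⊕ I_l W^l` over a DVR with
uniformizer `T` (when the closed point lies in the singular locus, `I_l ⊆ (T^l)` and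
`I_l · T^{-l} = (I_l : (T^l))`). -/
def transformFam {R : Type*} [CommRing R] (T : R) (I : ℕ → Ideal R) : ℕ → Ideal R :=
  fun l => (I l).colon (Ideal.span {T ^ l})

/-- The persistance: the least number `κ` of transforms needed so that the closed point no
longer lies in the singular locus. -/
def persist {R : Type*} [CommRing R] (m : Ideal R) (T : R)
    (G : Subalgebra R (Polynomial R)) : ℕ :=
  sInf {κ : ℕ | ¬ SingFam m ((transformFam T)^[κ] (idealFam G))}

/-- The set of elements of a ring integral over a subset `s` (monic equation with
coefficients in `s`). -/
def intClos {A : Type*} [CommRing A] (s : Set A) : Set A :=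
  {p : A | ∃ q : Polynomial A, q.Monic ∧ (∀ n, q.coeff n ∈ s) ∧ Polynomial.eval p q = 0}


/-- The monic polynomial `f = x^b + B_{b-2} x^{b-2} + ⋯ + B_1 x + B_0` with coefficients
`B_j = Bc j` (only `j ≤ b - 2` is relevant). -/
def minPolyOf {S : Type*} [CommRing S] (b : ℕ) (Bc : ℕ → S) : Polynomial S :=
  Polynomial.X ^ b + ∑ j ∈ Finset.range (b - 1), Polynomial.C (Bc j) * Polynomial.X ^ j


/-- The maximal ideal `(z_1, …, z_d)` of the polynomial ring `k[z_1, …, z_d]`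
(the kernel of evaluation at the origin). -/
def mPoly (k : Type) [Field k] (d : ℕ) : Ideal (MvPolynomial (Fin d) k) :=
  RingHom.ker (MvPolynomial.aeval (fun _ => (0 : k)) : MvPolynomial (Fin d) k →ₐ[k] k)

instance {k : Type} [Field k] {d : ℕ} : (mPoly k d).IsMaximal :=
  RingHom.ker_isMaximal_of_surjective _ (fun a => ⟨MvPolynomial.C a, by simp⟩)

instance {k : Type} [Field k] {d : ℕ} : (mPoly k d).IsPrime :=
  (inferInstance : (mPoly k d).IsMaximal).isPrime

/-- `IsSLoc k d S` says that `S` is (identified with) the localization of `k[z_1, …, z_d]`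
at the maximal ideal `(z_1, …, z_d)`. -/
abbrev IsSLoc (k : Type) [Field k] (d : ℕ) (S : Type) [CommRing S]
    [Algebra (MvPolynomial (Fin d) k) S] : Prop :=
  IsLocalization.AtPrime S (mPoly k d)

/-- The element `z_j` of `S`. -/
def zvar (k : Type) [Field k] (d : ℕ) (S : Type) [CommRing S]
    [Algebra (MvPolynomial (Fin d) k) S] (j : Fin d) : S :=
  algebraMap (MvPolynomial (Fin d) k) S (MvPolynomial.X j)

/-- The maximal ideal `m = (z_1, …, z_d)` of the local ring `S`. -/
def mS (k : Type) [Field k] (d : ℕ) (S : Type) [CommRing S]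
    [Algebra (MvPolynomial (Fin d) k) S] : Ideal S :=
  (mPoly k d).map (algebraMap (MvPolynomial (Fin d) k) S)


variable (k : Type) [Field k] (d : ℕ)
variable (S : Type) [CommRing S] [Algebra (MvPolynomial (Fin d) k) S] [Algebra k S]

/-- A local presentation, attached to the multiplicity, of a `d`-dimensional variety
`X = Spec B` at the closed point `ξ`:  `B = S[x_1,…,x_{n-d}]/I` with `I` prime,
`S → B` injective and finite, and the minimal polynomial over `Frac S` of the class `θ_i`
of `x_i` is `f_i = x_i^{b_i} + B_{i,b_i-2} x_i^{b_i-2} + ⋯ + B_{i,0}` with `b_i ≥ 2`,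
`B_{i,j} ∈ m^{b_i - j}`, and some `B_{i,j} ≠ 0`. -/
structure Presentation [IsDomain S] : Type 1 where
  /-- the number `n - d ≥ 1` of extra variables `x_i` -/
  e : ℕ
  he : 1 ≤ e
  /-- the prime ideal `I ⊆ S[x_1,…,x_{n-d}]` defining `X` -/
  I : Ideal (MvPolynomial (Fin e) S)
  hprime : I.IsPrime
  hinj : Function.Injective (algebraMap S (MvPolynomial (Fin e) S ⧸ I))
  hfinite : Module.Finite S (MvPolynomial (Fin e) S ⧸ I)
  /-- the degrees `b_i ≥ 2` -/
  b : Fin e → ℕ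
  hb : ∀ i, 2 ≤ b i
  /-- the coefficients `B_{i,j}` (only `j ≤ b_i - 2` is relevant) -/
  Bc : Fin e → ℕ → S
  /-- `f_i(θ_i) = 0` -/
  hroot : ∀ i, Polynomial.aeval (Ideal.Quotient.mk I (MvPolynomial.X i))
    (minPolyOf (b i) (Bc i)) = 0
  /-- `f_i` is irreducible over `Frac S`, i.e. it is the minimal polynomial of `θ_i` -/
  hirr : ∀ i, Irreducible ((minPolyOf (b i) (Bc i)).map (algebraMap S (FractionRing S)))
  /-- `B_{i,j} ∈ m^{b_i - j}` -/
  hmem : ∀ i, ∀ j ≤ b i - 2, Bc i j ∈ (mS k d S) ^ (b i - j)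
  /-- some `B_{i,j} ≠ 0` -/
  hnz : ∃ i, ∃ j ≤ b i - 2, Bc i j ≠ 0

variable [IsDomain S]
variable {k d S}

/-- The coordinate ring `B = S[x_1,…,x_{n-d}]/I` of `X`. -/
abbrev BRing (P : Presentation k d S) : Type :=
  MvPolynomial (Fin P.e) S ⧸ P.I

/-- The class `θ_i` of `x_i` in `B`. -/
def theta (P : Presentation k d S) (i : Fin P.e) : BRing P :=
  Ideal.Quotient.mk P.I (MvPolynomial.X i)

/-- The elimination algebra in dimension `d`:
`G_X^{(d)} = Diff( S[ B_{i,j} W^{b_i - j} : i, j ] )`, a Rees algebra over `S`. -/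
def elimAlg (P : Presentation k d S) (D : Fin d → Derivation k S S) :
    Subalgebra S (Polynomial S) :=
  diffClosure D {p : Polynomial S | ∃ i, ∃ j ≤ P.b i - 2,
    p = Polynomial.C (P.Bc i j) * Polynomial.X ^ (P.b i - j)}

/-- An arc in `X` through `ξ` (with the required nonvanishing): a `k`-algebra homomorphism
`φ : B → K⟦t⟧` sending the maximal ideal of `B` at `ξ` into `(t)`, with all `φ(θ_i)` and
`φ(z_j)` nonzero. -/
def IsArc (P : Presentation k d S) {K : Type} [Field K] [Algebra k K]
    (φ : BRing P →ₐ[k] PowerSeries K) : Prop :=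
  (∀ s ∈ mS k d S, φ (algebraMap S (BRing P) s) ∈ tId K) ∧
  (∀ i, φ (theta P i) ∈ tId K) ∧
  (∀ i, φ (theta P i) ≠ 0) ∧
  (∀ j, φ (algebraMap S (BRing P) (zvar k d S j)) ≠ 0)

/-- The order of an arc: the minimum of the `t`-adic orders of the `φ(θ_i)` and the
`φ(z_j)`. -/
def arcOrd (P : Presentation k d S) {K : Type} [Field K] [Algebra k K]
    (φ : BRing P →ₐ[k] PowerSeries K) : ℕ :=
  sInf ((Set.range fun i => tOrd (φ (theta P i))) ∪
    (Set.range fun j => tOrd (φ (algebraMap S (BRing P) (zvar k d S j)))))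

/-- The contact algebra `G^{(1)}_{X_0,φ}`: the Rees algebra over `K⟦t⟧` generated by the
`φ(θ_i) W` together with all `φ(g) W^l` for `g W^l` a homogeneous element of `G_X^{(d)}`
with `φ(g) ≠ 0`. -/
def contactAlg (P : Presentation k d S) (D : Fin d → Derivation k S S)
    {K : Type} [Field K] [Algebra k K] (φ : BRing P →ₐ[k] PowerSeries K) :
    Subalgebra (PowerSeries K) (Polynomial (PowerSeries K)) :=
  Algebra.adjoin (PowerSeries K)
    ((Set.range fun i => (Polynomial.C (φ (theta P i)) * Polynomial.X :
        Polynomial (PowerSeries K))) ∪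
      {p : Polynomial (PowerSeries K) | ∃ (g : S) (l : ℕ),
        (Polynomial.C g * Polynomial.X ^ l : Polynomial S) ∈ elimAlg P D ∧
        φ (algebraMap S (BRing P) g) ≠ 0 ∧
        p = Polynomial.C (φ (algebraMap S (BRing P) g)) * Polynomial.X ^ l})

/-- The order of contact `r_{X,φ}` of the arc `φ` with `Max mult(X)`: the order of the
contact algebra at the closed point of `K⟦t⟧`. -/
def rOrd (P : Presentation k d S) (D : Fin d → Derivation k S S)
    {K : Type} [Field K] [Algebra k K] (φ : BRing P →ₐ[k] PowerSeries K) : ℝ≥0∞ :=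
  reesOrder (tId K) (contactAlg P D φ)

/-- The persistance `ρ_{X,φ}`: the least number of transforms of the contact algebra
(i.e. of point blow-ups directed by `φ`) needed to make the closed point leave the
singular locus, that is, to lower the Nash multiplicity. -/
def rho (P : Presentation k d S) (D : Fin d → Derivation k S S)
    {K : Type} [Field K] [Algebra k K] (φ : BRing P →ₐ[k] PowerSeries K) : ℕ :=
  persist (tId K) (PowerSeries.X : PowerSeries K) (contactAlg P D φ)

/-!
For algebraically independent `a_j`, no nonzero form vanishes at `a`, so along the generic line
`z_j ↦ a_j t` the `t`-adic order of every `g ∈ S` is its `m`-adic order. After a ramified base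
change `t ↦ u t ^ e` with `u` a unit, this arc extends to the finite extension `B` of `S`, with
orders of elements of `S` multiplied by `e`. Newton's estimate for the roots `θ_i` of
`f_i = x ^ b + ∑ B_j x ^ j` then gives `ord φ(θ_i) ≥ e · ord(G)`, because the `B_j W ^ (b - j)` lie
in `G = G_X^{(d)}`. So the generators `φ(θ_i) W` do not lower the order of the contact algebra,
which is `e · ord(G)`, and `ord(φ) = e` is attained at the `z_j` since `ord(G) ≥ 1`.
-/

section AdicOrder

variable {R : Type*} [CommRing R] {m : Ideal R}

theorem adicOrder_eq_of_forall_mem_pow_iff {f : R} {N : ℕ} (h : ∀ n, f ∈ m ^ n ↔ n ≤ N) :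
    adicOrder m f = N := by
  simp only [adicOrder, h]
  exact csSup_Iic

theorem mem_pow_iff_le_adicOrder [IsNoetherianRing R] [IsDomain R] (hm : m ≠ ⊤) {f : R}
    (hf : f ≠ 0) {n : ℕ} : f ∈ m ^ n ↔ n ≤ adicOrder m f := by
  obtain ⟨N, hN⟩ : ∃ N, f ∉ m ^ N := by
    by_contra! h
    exact hf <| by simpa [Ideal.iInf_pow_eq_bot_of_isDomain m hm] using Ideal.mem_iInf.2 h
  have hbdd : BddAbove {n | f ∈ m ^ n} :=
    ⟨N, fun n hn => le_of_not_ge fun h => hN (Ideal.pow_le_pow_right h hn)⟩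
  refine ⟨fun h => le_csSup hbdd h, fun h => Ideal.pow_le_pow_right h ?_⟩
  exact Nat.sSup_mem ⟨0, by simp⟩ hbdd

end AdicOrder

section PowerSeries

open scoped PowerSeries

theorem natCast_le_order_iff {K : Type*} [CommRing K] {f : K⟦X⟧} {n : ℕ} :
    (n : ℕ∞) ≤ f.order ↔ ∀ i < n, PowerSeries.coeff i f = 0 :=
  ⟨fun h i hi => PowerSeries.coeff_of_lt_order i ((Nat.cast_lt.2 hi).trans_le h),
    PowerSeries.nat_le_order f n⟩

theorem mem_tId_pow_iff {K : Type*} [CommRing K] {f : K⟦X⟧} {n : ℕ} :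
    f ∈ tId K ^ n ↔ (n : ℕ∞) ≤ f.order := by
  rw [tId, Ideal.span_singleton_pow, Ideal.mem_span_singleton, PowerSeries.X_pow_dvd_iff,
    natCast_le_order_iff]

theorem coe_tOrd {K : Type*} [CommRing K] {f : K⟦X⟧} (hf : f ≠ 0) : (tOrd f : ℕ∞) = f.order := by
  obtain ⟨N, hN⟩ := ENat.ne_top_iff_exists.1 (mt PowerSeries.order_eq_top.1 hf)
  rw [tOrd, adicOrder_eq_of_forall_mem_pow_iff (N := N), hN]
  intro n
  rw [mem_tId_pow_iff, ← hN, Nat.cast_le]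

theorem le_order_add {K : Type*} [CommRing K] {c : ℝ≥0∞} {f g : K⟦X⟧} (hf : c ≤ f.order)
    (hg : c ≤ g.order) : c ≤ (f + g).order :=
  calc c ≤ (min f.order g.order : ℕ∞) := by simp [hf, hg]
    _ ≤ (f + g).order := by gcongr; exact PowerSeries.min_order_le_order_add f g

theorem order_map_eq_mul {K A : Type*} [Field K] [CommRing A] [IsDomain A] (τ : K⟦X⟧ →+* A⟦X⟧)
    {e : ℕ∞} (he : e ≠ 0) (hτ : (τ PowerSeries.X).order = e) (f : K⟦X⟧) :
    (τ f).order = e * f.order := by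
  rcases eq_or_ne f 0 with rfl | hf
  · simp [he]
  obtain ⟨n, u, rfl⟩ := IsDiscreteValuationRing.eq_unit_mul_pow_irreducible hf
    PowerSeries.X_irreducible
  rw [map_mul, map_pow, PowerSeries.order_mul, PowerSeries.order_pow, hτ, PowerSeries.order_mul,
    PowerSeries.order_X_pow, PowerSeries.order_zero_of_unit u.isUnit,
    PowerSeries.order_zero_of_unit (u.isUnit.map τ), zero_add, zero_add, nsmul_eq_mul, mul_comm]

/-- Otherwise `yᵇ` would be the unique term of least order in the relation `∑ⱼ aⱼ yʲ = 0`. -/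
theorem le_order_of_eval₂_eq_zero {R K : Type*} [CommRing R] [CommRing K] [IsDomain K]
    (φ : R →+* K⟦X⟧) {P : R[X]} (hP : P.Monic) {y : K⟦X⟧} (hy : P.eval₂ φ y = 0) {c : ℝ≥0∞}
    (hc : ∀ j < P.natDegree, c * (P.natDegree - j : ℕ) ≤ (φ (P.coeff j)).order) :
    c ≤ y.order := by
  by_contra! hlt
  obtain ⟨N, hN⟩ := ENat.ne_top_iff_exists.1 (ENat.toENNReal_ne_top.1 hlt.ne_top)
  have hpow (j : ℕ) : (y ^ j).order = (j * N : ℕ) := by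
    rw [PowerSeries.order_pow, ← hN, nsmul_eq_mul, Nat.cast_mul]
  have hterm : ∀ j ∈ Finset.range P.natDegree,
      (y ^ P.natDegree).order < (φ (P.coeff j) * y ^ j).order := by
    intro j hj
    obtain ⟨i, hi⟩ := Nat.exists_eq_add_of_lt (Finset.mem_range.1 hj)
    have hij : P.natDegree - j = i + 1 := by omega
    rw [PowerSeries.order_mul, hpow, hpow, ← ENat.toENNReal_lt, ENat.toENNReal_add]
    calc (((P.natDegree * N : ℕ) : ℕ∞) : ℝ≥0∞) = N * (i + 1 : ℕ) + (j * N : ℕ) := by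
          rw [hi, ENat.toENNReal_coe]; push_cast; ring
      _ < c * (i + 1 : ℕ) + (j * N : ℕ) := by
          rw [← hN, ENat.toENNReal_coe] at hlt
          gcongr
          all_goals simp [ENNReal.mul_eq_top]
      _ ≤ _ := by
          rw [← hij, ENat.toENNReal_coe]
          gcongr
          exact hc j (Finset.mem_range.1 hj)
  have hsum : (y ^ P.natDegree).order <
      (∑ j ∈ Finset.range P.natDegree, φ (P.coeff j) * y ^ j).order := by
    refine Finset.sum_induction _ (fun f : K⟦X⟧ => (y ^ P.natDegree).order < f.order)
      (fun f g hf hg => (lt_min hf hg).trans_le (PowerSeries.min_order_le_order_add f g)) ?_ hterm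
    rw [hpow, PowerSeries.order_zero]
    exact ENat.natCast_lt_top _
  have hlead : y ^ P.natDegree =
      -∑ j ∈ Finset.range P.natDegree, φ (P.coeff j) * y ^ j := by
    rw [Polynomial.eval₂_eq_sum_range, Finset.sum_range_succ, hP.coeff_natDegree, map_one,
      one_mul] at hy
    exact eq_neg_of_add_eq_zero_right hy
  rw [hlead, PowerSeries.order_neg] at hsum
  exact hsum.false

end PowerSeries

section ReesAlgebra

variable {R : Type*} [CommRing R]

theorem le_reesOrder_iff {m : Ideal R} {G : Subalgebra R R[X]} {c : ℝ≥0∞} :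
    c ≤ reesOrder m G ↔ ∀ (f : R) (n : ℕ), f ≠ 0 → C f * X ^ n ∈ G → c * n ≤ adicOrder m f := by
  refine le_sInf_iff.trans ⟨fun h f n hf hG => ?_, ?_⟩
  · rcases n.eq_zero_or_pos with rfl | hn
    · simp
    · exact ENNReal.mul_le_of_le_div (h _ ⟨f, n, hf, hn, hG, rfl⟩)
  · rintro h _ ⟨f, n, hf, hn, hG, rfl⟩
    refine (ENNReal.le_div_iff_mul_le (.inl ?_) (.inl (ENNReal.natCast_ne_top n))).2 (h f n hf hG)
    exact Nat.cast_ne_zero.2 (Nat.one_le_iff_ne_zero.1 hn)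

theorem derivation_apply_mem_pow {A : Type*} [CommRing A] [Algebra A R] (D : Derivation A R R)
    {m : Ideal R} {l : ℕ} {f : R} (hf : f ∈ m ^ (l + 1)) : D f ∈ m ^ l := by
  induction l generalizing f with
  | zero => simp
  | succ l ih =>
    rw [pow_succ] at hf
    refine Submodule.mul_induction_on hf (fun a ha b hb => ?_) fun a b ha hb => ?_
    · rw [D.leibniz, smul_eq_mul, smul_eq_mul]
      refine add_mem (Ideal.mul_mem_right _ _ ha) ?_
      rw [pow_succ']
      exact Ideal.mul_mem_mul hb (ih ha)
    · rw [map_add]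
      exact add_mem ha hb

theorem C_mul_X_pow_mem_reesAlgebra_iff {m : Ideal R} {f : R} {n : ℕ} :
    C f * X ^ n ∈ reesAlgebra m ↔ f ∈ m ^ n := by
  rw [C_mul_X_pow_eq_monomial, reesAlgebra.monomial_mem]

section DiffClosure

variable {A ι : Type*} [CommRing A] [Algebra A R] (D : ι → Derivation A R R)

theorem subset_diffClosure (M : Set R[X]) : M ⊆ diffClosure D M := fun _ hp =>
  Algebra.mem_sInf.2 fun _ hG => hG.1 hp

theorem diffClosure_le_reesAlgebra {m : Ideal R} {M : Set R[X]} (hM : M ⊆ reesAlgebra m) :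
    diffClosure D M ≤ reesAlgebra m := by
  refine sInf_le ⟨hM, fun p hp n => ?_, fun f l _ => ?_, fun f l j => ?_⟩ <;>
    simp only [C_mul_X_pow_mem_reesAlgebra_iff]
  · exact hp n
  · exact fun hf => Ideal.pow_le_pow_right l.le_succ hf
  · exact derivation_apply_mem_pow (D j)

end DiffClosure

section Slope

open scoped PowerSeries

variable (K : Type*) [CommRing K]

/-- The subalgebra of `K⟦t⟧[W]` of the polynomials `∑ fₙ Wⁿ` with `ord fₙ ≥ c n` for all `n`,
the largest graded subalgebra whose order at the closed point is at least `c`. -/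
def slopeSubalgebra (c : ℝ≥0∞) : Subalgebra K⟦X⟧ K⟦X⟧[X] where
  carrier := {p | ∀ n, c * n ≤ (p.coeff n).order}
  mul_mem' {p q} hp hq n := by
    rw [Polynomial.coeff_mul]
    refine Finset.sum_induction _ (fun f : K⟦X⟧ => c * n ≤ f.order) (fun _ _ => le_order_add)
      (by simp) fun i hi => ?_
    calc c * n = c * i.1 + c * i.2 := by
          rw [← mul_add, ← Nat.cast_add, Finset.HasAntidiagonal.mem_antidiagonal.1 hi]
      _ ≤ ((p.coeff i.1).order + (q.coeff i.2).order : ℕ∞) := by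
          rw [ENat.toENNReal_add]; exact add_le_add (hp _) (hq _)
      _ ≤ (p.coeff i.1 * q.coeff i.2).order := by gcongr; exact PowerSeries.le_order_mul _ _
  add_mem' {p q} hp hq n := by
    rw [Polynomial.coeff_add]
    exact le_order_add (hp n) (hq n)
  algebraMap_mem' f n := by
    rw [Polynomial.algebraMap_eq, Polynomial.coeff_C]
    split_ifs with hn <;> simp [hn]

variable {K}

theorem C_mul_X_pow_mem_slopeSubalgebra_iff {c : ℝ≥0∞} {f : K⟦X⟧} {n : ℕ} :
    C f * X ^ n ∈ slopeSubalgebra K c ↔ c * n ≤ f.order := by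
  refine ⟨fun h => by simpa using h n, fun h i => ?_⟩
  rw [Polynomial.coeff_C_mul_X_pow]
  split_ifs with hi
  · rwa [hi]
  · simp

theorem le_reesOrder_of_le_slopeSubalgebra {c : ℝ≥0∞} {G : Subalgebra K⟦X⟧ K⟦X⟧[X]}
    (hG : G ≤ slopeSubalgebra K c) : c ≤ reesOrder (tId K) G := by
  refine le_reesOrder_iff.2 fun f n hf hn => ?_
  have := C_mul_X_pow_mem_slopeSubalgebra_iff.1 (hG hn)
  rwa [← coe_tOrd hf, ENat.toENNReal_coe] at this

end Slope

end ReesAlgebra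

section Expansion

open scoped PowerSeries nonZeroDivisors

variable {K V : Type*} [CommRing K] [CommRing V] [Algebra K V] {π : V →ₐ[K] K} {s : V}
  (hs : s ∈ V⁰) (hπ : RingHom.ker π = Ideal.span {s})

include hπ in
theorem apply_generator_eq_zero : π s = 0 := by
  rw [← RingHom.mem_ker, hπ]
  exact Ideal.mem_span_singleton_self s

include hs hπ

theorem existsUnique_eq_algebraMap_add_mul (x : V) : ∃! y, x = algebraMap K V (π x) + s * y := by
  obtain ⟨y, hy⟩ : s ∣ x - algebraMap K V (π x) := by
    rw [← Ideal.mem_span_singleton, ← hπ, RingHom.mem_ker, map_sub, AlgHom.commutes]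
    exact sub_self _
  refine ⟨y, by simp only [← hy, add_sub_cancel], fun z hz => ?_⟩
  refine (mul_cancel_left_mem_nonZeroDivisors hs).1 ?_
  rw [← hy, sub_eq_of_eq_add' hz]

/-- The quotient of `x` by `s`, the remainder being the constant `π x`. -/
def tail : V →ₗ[K] V where
  toFun x := (existsUnique_eq_algebraMap_add_mul hs hπ x).choose
  map_add' x y := by
    have h := fun z => (existsUnique_eq_algebraMap_add_mul hs hπ z).choose_spec
    refine ((h (x + y)).2 _ ?_).symm
    nth_rewrite 1 [(h x).1, (h y).1]
    simp only [map_add]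
    ring
  map_smul' c x := by
    have h := fun z => (existsUnique_eq_algebraMap_add_mul hs hπ z).choose_spec
    refine ((h (c • x)).2 _ ?_).symm
    nth_rewrite 1 [(h x).1]
    simp only [Algebra.smul_def, map_mul, AlgHom.commutes, Algebra.algebraMap_self_apply,
      RingHom.id_apply]
    ring

theorem eq_algebraMap_add_mul_tail (x : V) : x = algebraMap K V (π x) + s * tail hs hπ x :=
  (existsUnique_eq_algebraMap_add_mul hs hπ x).choose_spec.1

theorem tail_eq_of_eq {x y : V} {c : K} (h : x = algebraMap K V c + s * y) :
    tail hs hπ x = y := by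
  have hc : π x = c := by simp [h, apply_generator_eq_zero hπ]
  refine ((existsUnique_eq_algebraMap_add_mul hs hπ x).choose_spec.2 y ?_).symm
  rwa [hc]

theorem tail_algebraMap (c : K) : tail hs hπ (algebraMap K V c) = 0 :=
  tail_eq_of_eq hs hπ (c := c) (by simp)

theorem tail_generator : tail hs hπ s = 1 :=
  tail_eq_of_eq hs hπ (c := 0) (by simp)

theorem tail_mul (x y : V) : tail hs hπ (x * y) = π x • tail hs hπ y + tail hs hπ x * y := by
  refine tail_eq_of_eq hs hπ (c := π x * π y) ?_
  rw [map_mul, Algebra.smul_def]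
  linear_combination y * eq_algebraMap_add_mul_tail hs hπ x +
    algebraMap K V (π x) * eq_algebraMap_add_mul_tail hs hπ y

/-- The power series whose coefficients are the digits of `x` in base `s`, as a linear map. -/
def expansionLinearMap : V →ₗ[K] K⟦X⟧ where
  toFun x := PowerSeries.mk fun n => π ((tail hs hπ ^ n) x)
  map_add' x y := by ext n; simp
  map_smul' c x := by ext n; simp

theorem expansionLinearMap_eq (x : V) : expansionLinearMap hs hπ x =
    PowerSeries.C (π x) + PowerSeries.X * expansionLinearMap hs hπ (tail hs hπ x) := by
  ext n
  cases n with
  | zero => simp [expansionLinearMap]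
  | succ n => simp [expansionLinearMap, PowerSeries.coeff_succ_X_mul, pow_succ]

theorem expansionLinearMap_mul (x y : V) : expansionLinearMap hs hπ (x * y) =
    expansionLinearMap hs hπ x * expansionLinearMap hs hπ y := by
  ext n
  induction n using Nat.strong_induction_on generalizing x y with
  | _ n ih =>
    have hxy : expansionLinearMap hs hπ x * expansionLinearMap hs hπ y =
        PowerSeries.C (π (x * y)) + PowerSeries.X *
          (π x • expansionLinearMap hs hπ (tail hs hπ y) +
            expansionLinearMap hs hπ (tail hs hπ x) * expansionLinearMap hs hπ y) := by
      rw [map_mul, map_mul, PowerSeries.smul_eq_C_mul]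
      linear_combination expansionLinearMap hs hπ y * expansionLinearMap_eq hs hπ x +
        PowerSeries.C (π x) * expansionLinearMap_eq hs hπ y
    rw [hxy, expansionLinearMap_eq hs hπ (x * y), tail_mul, map_add,
      (expansionLinearMap hs hπ).map_add, (expansionLinearMap hs hπ).map_smul]
    cases n with
    | zero => simp
    | succ n => simp only [map_add, PowerSeries.coeff_succ_X_mul, ih n n.lt_succ_self]

theorem expansionLinearMap_one : expansionLinearMap hs hπ 1 = 1 := by
  have h : tail hs hπ 1 = 0 := by simpa using tail_algebraMap hs hπ 1
  rw [expansionLinearMap_eq, h, map_zero, mul_zero, add_zero, map_one, map_one]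

/-- The expansion in powers of the uniformizer `s`, as a homomorphism into power series. -/
def expansion : V →ₐ[K] K⟦X⟧ :=
  AlgHom.ofLinearMap (expansionLinearMap hs hπ) (expansionLinearMap_one hs hπ)
    (expansionLinearMap_mul hs hπ)

theorem expansion_generator : expansion hs hπ s = PowerSeries.X := by
  have h := expansionLinearMap_eq hs hπ s
  rwa [tail_generator, expansionLinearMap_one, apply_generator_eq_zero hπ, map_zero, zero_add,
    mul_one] at h

end Expansion

section DiscreteValuationRing

open scoped PowerSeries nonZeroDivisors
open IsDiscreteValuationRing IsLocalRing

theorem exists_algHom_powerSeries_order_eq_addVal {K V : Type*} [Field K] [CommRing V] [IsDomain V]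
    [IsDiscreteValuationRing V] [Algebra K V]
    (h : Function.Bijective (algebraMap K (ResidueField V))) :
    ∃ E : V →ₐ[K] K⟦X⟧, ∀ x, (E x).order = addVal V x := by
  let π : V →ₐ[K] K := (AlgEquiv.ofBijective (Algebra.ofId K (ResidueField V)) h).symm.toAlgHom.comp
    (IsScalarTower.toAlgHom K V (ResidueField V))
  obtain ⟨s, hs⟩ := exists_irreducible V
  have hπ : RingHom.ker π = Ideal.span {s} := by
    rw [← hs.maximalIdeal_eq]
    ext x
    simp [π, RingHom.mem_ker]
  refine ⟨expansion (mem_nonZeroDivisors_of_ne_zero hs.ne_zero) hπ, fun x => ?_⟩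
  rcases eq_or_ne x 0 with rfl | hx
  · simp
  obtain ⟨n, u, rfl⟩ := eq_unit_mul_pow_irreducible hx hs
  rw [map_mul, map_pow, expansion_generator, PowerSeries.order_mul, PowerSeries.order_X_pow,
    PowerSeries.order_zero_of_unit (u.isUnit.map _), zero_add, addVal_def' u hs]

theorem algebraMap_bijective_of_algebraMap_X_eq_zero {K κ : Type*} [Field K] [IsAlgClosed K]
    [Field κ] [Algebra K κ] [Algebra K⟦X⟧ κ] [IsScalarTower K K⟦X⟧ κ] [Algebra.IsIntegral K⟦X⟧ κ]
    (hX : algebraMap K⟦X⟧ κ PowerSeries.X = 0) : Function.Bijective (algebraMap K κ) := by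
  have hconst (r : K⟦X⟧) : algebraMap K⟦X⟧ κ r = algebraMap K κ (PowerSeries.constantCoeff r) := by
    nth_rewrite 1 [PowerSeries.eq_X_mul_shift_add_const r]
    rw [map_add, map_mul, hX, zero_mul, zero_add, IsScalarTower.algebraMap_apply K K⟦X⟧ κ,
      PowerSeries.algebraMap_apply, Algebra.algebraMap_self_apply]
  have : Algebra.IsIntegral K κ := ⟨fun y => by
    obtain ⟨p, hp, hpy⟩ := Algebra.IsIntegral.isIntegral (R := K⟦X⟧) y
    refine ⟨p.map PowerSeries.constantCoeff, hp.map _, ?_⟩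
    rw [Polynomial.eval₂_map, ← hpy]
    congr 1
    ext r
    exact (hconst r).symm⟩
  exact IsAlgClosed.algebraMap_bijective_of_isIntegral

/-- Expand along a prime of `O` over `t`, whose residue field is that of `K⟦t⟧`. -/
theorem exists_algHom_powerSeries_order_X_eq {K O : Type*} [Field K] [IsAlgClosed K] [CommRing O]
    [IsDedekindDomain O] [Algebra K O] [Algebra K⟦X⟧ O] [IsScalarTower K K⟦X⟧ O]
    [FaithfulSMul K⟦X⟧ O] [Algebra.IsIntegral K⟦X⟧ O] :
    ∃ (E : O →ₐ[K] K⟦X⟧) (e : ℕ), e ≠ 0 ∧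
      (E (algebraMap K⟦X⟧ O PowerSeries.X)).order = e := by
  have hinj := FaithfulSMul.algebraMap_injective K⟦X⟧ O
  obtain ⟨Q, hQ, hQcomap⟩ := Ideal.exists_ideal_over_maximal_of_isIntegral (S := O)
    (maximalIdeal K⟦X⟧) (((RingHom.injective_iff_ker_eq_bot _).1 hinj).trans_le bot_le)
  have hXQ : algebraMap K⟦X⟧ O PowerSeries.X ∈ Q := by
    rw [← Ideal.mem_comap, hQcomap, PowerSeries.maximalIdeal_eq_span_X]
    exact Ideal.mem_span_singleton_self _
  have hX0 : algebraMap K⟦X⟧ O PowerSeries.X ≠ 0 := by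
    rw [Ne, map_eq_zero_iff _ hinj]
    exact PowerSeries.X_ne_zero
  have hQbot : Q ≠ ⊥ := by
    rintro rfl
    exact hX0 (Ideal.mem_bot.1 hXQ)
  let V := Localization.AtPrime Q
  have : IsDiscreteValuationRing V :=
    IsLocalization.AtPrime.isDiscreteValuationRing_of_dedekind_domain O hQbot V
  have : Algebra.IsIntegral K⟦X⟧ Q.ResidueField :=
    Algebra.IsIntegral.of_surjective (IsScalarTower.toAlgHom K⟦X⟧ O Q.ResidueField)
      Q.algebraMap_residueField_surjective
  obtain ⟨E, hE⟩ := exists_algHom_powerSeries_order_eq_addVal (V := V)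
    (algebraMap_bijective_of_algebraMap_X_eq_zero (K := K) (κ := Q.ResidueField) (by
      rw [IsScalarTower.algebraMap_apply K⟦X⟧ O Q.ResidueField,
        Ideal.algebraMap_residueField_eq_zero]
      exact hXQ))
  have hXV : addVal V (algebraMap O V (algebraMap K⟦X⟧ O PowerSeries.X)) ≠ ⊤ := by
    rwa [Ne, addVal_eq_top_iff, FaithfulSMul.algebraMap_eq_zero_iff]
  obtain ⟨e, he⟩ := ENat.ne_top_iff_exists.1 hXV
  refine ⟨E.comp (IsScalarTower.toAlgHom K O V), e, ?_, (hE _).trans he.symm⟩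
  rintro rfl
  rw [Nat.cast_zero, eq_comm, addVal_eq_zero_iff,
    IsLocalization.AtPrime.isUnit_to_map_iff V Q] at he
  exact he hXQ

end DiscreteValuationRing

section RamifiedLift

open scoped PowerSeries TensorProduct

theorem nontrivial_tensorProduct_of_isIntegral (A F B : Type*) [CommRing A] [Field F] [Algebra A F]
    [FaithfulSMul A F] [CommRing B] [IsDomain B] [Algebra A B] [FaithfulSMul A B]
    [Algebra.IsIntegral A B] : Nontrivial (F ⊗[A] B) := by
  have : IsDomain A := (FaithfulSMul.algebraMap_injective A F).isDomain
  have : Module.IsTorsionFree A (AlgebraicClosure F) := by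
    rw [Module.isTorsionFree_iff_algebraMap_injective,
      IsScalarTower.algebraMap_eq A F (AlgebraicClosure F)]
    exact (algebraMap F _).injective.comp (FaithfulSMul.algebraMap_injective A F)
  let g : F ⊗[A] B →ₐ[F] AlgebraicClosure F :=
    Algebra.TensorProduct.lift (Algebra.ofId F _) (IsAlgClosed.lift : B →ₐ[A] _)
      fun _ _ => Commute.all _ _
  exact g.toRingHom.domain_nontrivial

section

variable {A B K : Type*} [CommRing A] [CommRing B] [Algebra A B] [Field K] [IsAlgClosed K]
  [CharZero K] [Algebra A K⟦X⟧]

theorem exists_ramified_lift_of_hom_to_finite_extension [Algebra.IsIntegral A B] {F L : Type*}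
    [Field F] [Algebra K⟦X⟧ F] [IsFractionRing K⟦X⟧ F] [Field L] [Algebra F L]
    [FiniteDimensional F L] [Algebra K⟦X⟧ L] [IsScalarTower K⟦X⟧ F L] (g : B →+* L)
    (hg : ∀ a, g (algebraMap A B a) = algebraMap K⟦X⟧ L (algebraMap A K⟦X⟧ a)) :
    ∃ (τ : K⟦X⟧ →ₐ[K] K⟦X⟧) (Φ : B →+* K⟦X⟧) (e : ℕ), e ≠ 0 ∧ (τ PowerSeries.X).order = e ∧
      ∀ a, Φ (algebraMap A B a) = τ (algebraMap A K⟦X⟧ a) := by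
  have : CharZero K⟦X⟧ := charZero_of_injective_algebraMap PowerSeries.C_injective
  have : CharZero F := IsFractionRing.charZero_of_isFractionRing K⟦X⟧
  let O := integralClosure K⟦X⟧ L
  have : IsDedekindDomain O := integralClosure.isDedekindDomain K⟦X⟧ F L
  let _ : Algebra K O := ((algebraMap K⟦X⟧ O).comp (algebraMap K K⟦X⟧)).toAlgebra
  have : IsScalarTower K K⟦X⟧ O := .of_algebraMap_eq' rfl
  have hgO (b : B) : g b ∈ O :=
    (Algebra.IsIntegral.isIntegral b).map_of_comp_eq (algebraMap A K⟦X⟧) g (RingHom.ext hg).symm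
  have : FaithfulSMul K⟦X⟧ O := by
    refine (faithfulSMul_iff_algebraMap_injective _ _).2 (.of_comp (f := algebraMap O L) ?_)
    rw [← RingHom.coe_comp, ← IsScalarTower.algebraMap_eq, IsScalarTower.algebraMap_eq K⟦X⟧ F L]
    exact (algebraMap F L).injective.comp (IsFractionRing.injective K⟦X⟧ F)
  obtain ⟨E, e, he, hE⟩ := exists_algHom_powerSeries_order_X_eq (K := K) (O := O)
  refine ⟨E.comp (IsScalarTower.toAlgHom K K⟦X⟧ O), (E : O →+* K⟦X⟧).comp (g.codRestrict O hgO), e,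
    he, hE, fun a => congrArg E (Subtype.ext (hg a))⟩

theorem exists_ramified_lift [IsDomain B] [FaithfulSMul A B] [Module.Finite A B]
    [FaithfulSMul A K⟦X⟧] :
    ∃ (τ : K⟦X⟧ →ₐ[K] K⟦X⟧) (Φ : B →+* K⟦X⟧) (e : ℕ), e ≠ 0 ∧ (τ PowerSeries.X).order = e ∧
      ∀ a, Φ (algebraMap A B a) = τ (algebraMap A K⟦X⟧ a) := by
  let F := FractionRing K⟦X⟧
  have : FaithfulSMul A F := by
    rw [faithfulSMul_iff_algebraMap_injective, IsScalarTower.algebraMap_eq A K⟦X⟧ F]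
    exact (IsFractionRing.injective K⟦X⟧ F).comp (FaithfulSMul.algebraMap_injective A K⟦X⟧)
  have := nontrivial_tensorProduct_of_isIntegral A F B
  obtain ⟨M, hM⟩ := Ideal.exists_maximal (F ⊗[A] B)
  let _ := Ideal.Quotient.field M
  refine exists_ramified_lift_of_hom_to_finite_extension (F := F) (L := (F ⊗[A] B) ⧸ M)
    ((Ideal.Quotient.mk M).comp Algebra.TensorProduct.includeRight.toRingHom) fun a => ?_
  rw [← IsScalarTower.algebraMap_apply A K⟦X⟧]
  exact congrArg (Ideal.Quotient.mk M)
    ((Algebra.TensorProduct.includeRight : B →ₐ[A] F ⊗[A] B).commutes a)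

end

end RamifiedLift

section GenericArc

open scoped PowerSeries

section Line

variable {σ R K : Type*} [CommRing R] [CommRing K] [Algebra R K]

/-- The arc `xⱼ ↦ aⱼ t` running along the line through the origin with direction `a`. -/
def lineArc (a : σ → K) : MvPolynomial σ R →ₐ[R] K⟦X⟧ :=
  MvPolynomial.aeval fun j => PowerSeries.C (a j) * PowerSeries.X

theorem lineArc_monomial (a : σ → K) (m : σ →₀ ℕ) (c : R) :
    lineArc a (MvPolynomial.monomial m c) =
      PowerSeries.C (MvPolynomial.aeval a (MvPolynomial.monomial m c)) *
        PowerSeries.X ^ m.degree := by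
  simp only [lineArc, MvPolynomial.aeval_monomial, Finsupp.prod, mul_pow, Finset.prod_mul_distrib,
    map_mul, map_prod, map_pow, Finset.prod_pow_eq_pow_sum, ← mul_assoc, Finsupp.degree_apply,
    PowerSeries.algebraMap_apply]

theorem coeff_lineArc (a : σ → K) (n : ℕ) (p : MvPolynomial σ R) :
    PowerSeries.coeff n (lineArc a p) =
      MvPolynomial.aeval a (MvPolynomial.homogeneousComponent n p) := by
  induction p using MvPolynomial.induction_on' with
  | add p q hp hq => simp only [map_add, hp, hq]
  | monomial m c =>
    rw [lineArc_monomial, PowerSeries.coeff_C_mul, PowerSeries.coeff_X_pow,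
      MvPolynomial.homogeneousComponent_of_mem (MvPolynomial.isHomogeneous_monomial c rfl)]
    split_ifs <;> simp

/-- For algebraically independent `aⱼ`, no nonzero homogeneous form vanishes at `a`. -/
theorem mem_pow_idealOfVars_iff_le_order_lineArc {a : σ → K} (ha : AlgebraicIndependent R a)
    {p : MvPolynomial σ R} {n : ℕ} :
    p ∈ MvPolynomial.idealOfVars σ R ^ n ↔ (n : ℕ∞) ≤ (lineArc a p).order := by
  simp_rw [MvPolynomial.mem_pow_idealOfVars_iff', natCast_le_order_iff, coeff_lineArc,
    map_eq_zero_iff (MvPolynomial.aeval a) ha, MvPolynomial.ext_iff,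
    MvPolynomial.coeff_homogeneousComponent, MvPolynomial.coeff_zero]
  refine ⟨fun h i hi x => ?_, fun h x hx => by simpa using h _ hx x⟩
  split_ifs with hx
  · exact h x (hx ▸ hi)
  · rfl

end Line

section ScalesOrder

variable {R K : Type*} [CommRing R] [CommRing K]

/-- A map `φ : R → K⟦t⟧` multiplies orders by `e` if the `t`-adic order of `φ g` is `e` times the
`m`-adic order of `g`, for every `g ≠ 0` (the junk value `adicOrder m 0` plays no role). -/
def ScalesOrder (m : Ideal R) (e : ℕ) (φ : R → K⟦X⟧) : Prop :=
  ∀ g, g ≠ 0 → (φ g).order = (e * adicOrder m g : ℕ)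

theorem ScalesOrder.apply_ne_zero {m : Ideal R} {e : ℕ} {φ : R → K⟦X⟧} (hφ : ScalesOrder m e φ)
    {g : R} (hg : g ≠ 0) : φ g ≠ 0 := by
  intro h
  have := hφ g hg
  rw [h, PowerSeries.order_zero] at this
  exact ENat.top_ne_natCast _ this

theorem ScalesOrder.injective {m : Ideal R} {e : ℕ} {φ : R →+* K⟦X⟧} (hφ : ScalesOrder m e φ) :
    Function.Injective φ :=
  (injective_iff_map_eq_zero φ).2 fun _ => not_imp_not.1 hφ.apply_ne_zero

theorem scalesOrder_one_of_mem_pow_iff [IsNoetherianRing R] [IsDomain R] {m : Ideal R}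
    (hm : m ≠ ⊤) {φ : R → K⟦X⟧} (h : ∀ (g : R) (n : ℕ), g ∈ m ^ n ↔ (n : ℕ∞) ≤ (φ g).order) :
    ScalesOrder m 1 φ := by
  intro g hg
  refine ENat.eq_of_forall_natCast_le_iff fun n => ?_
  rw [← h, mem_pow_iff_le_adicOrder hm hg, one_mul, Nat.cast_le]

end ScalesOrder

section Extension

variable {F A K : Type*} [CommRing F] [CommRing A] [Algebra F A] [Field K] [Algebra F K]

theorem exists_algHom_scalesOrder_of_isLocalization {L : Type*} [CommRing L] [IsDomain L]
    [Algebra A L] [Algebra F L] [IsScalarTower F A L] [IsNoetherianRing A] (p : Ideal A)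
    [p.IsMaximal] [IsLocalization.AtPrime L p] (φ : A →ₐ[F] K⟦X⟧)
    (hφ : ∀ (f : A) (n : ℕ), f ∈ p ^ n ↔ (n : ℕ∞) ≤ (φ f).order) :
    ∃ ψ : L →ₐ[F] K⟦X⟧, ScalesOrder (p.map (algebraMap A L)) 1 ψ := by
  have hunit (u : p.primeCompl) : IsUnit (φ u) := by
    have hu : ¬ ((1 : ℕ) : ℕ∞) ≤ (φ u).order := by
      rw [← hφ, pow_one]
      exact u.2
    rwa [Nat.cast_one, PowerSeries.one_le_order_iff_constCoeff_eq_zero, ← ne_eq,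
      ← isUnit_iff_ne_zero, ← PowerSeries.isUnit_iff_constantCoeff] at hu
  have := IsLocalization.AtPrime.isLocalRing L p
  have := IsLocalization.isNoetherianRing p.primeCompl L ‹_›
  refine ⟨IsLocalization.liftAlgHom hunit, ?_⟩
  rw [IsLocalization.AtPrime.map_eq_maximalIdeal p L]
  refine scalesOrder_one_of_mem_pow_iff Ideal.IsPrime.ne_top' fun g n => ?_
  obtain ⟨⟨f, u⟩, hfu⟩ := IsLocalization.surj p.primeCompl g
  have hφf : IsLocalization.liftAlgHom hunit g * φ u = φ f := by
    have := congrArg (IsLocalization.liftAlgHom hunit) hfu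
    rwa [map_mul, IsLocalization.liftAlgHom_apply, IsLocalization.liftAlgHom_apply,
      IsLocalization.lift_eq, IsLocalization.liftAlgHom_apply, IsLocalization.lift_eq] at this
  rw [← Ideal.mul_unit_mem_iff_mem _ (IsLocalization.map_units L u), hfu, ← Ideal.mem_under,
    IsLocalization.AtPrime.under_maximalIdeal_pow p, hφ, ← hφf,
    PowerSeries.order_mul, PowerSeries.order_zero_of_unit (hunit u), add_zero]

theorem exists_algHom_scalesOrder_of_finite [IsAlgClosed K] [CharZero K] {B : Type*} [CommRing B]
    [IsDomain B] [Algebra A B] [Algebra F B] [IsScalarTower F A B] [FaithfulSMul A B]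
    [Module.Finite A B] {m : Ideal A} (ψ : A →ₐ[F] K⟦X⟧) (hψ : ScalesOrder m 1 ψ) :
    ∃ (φ : B →ₐ[F] K⟦X⟧) (e : ℕ), e ≠ 0 ∧ ScalesOrder m e fun g => φ (algebraMap A B g) := by
  let _ := ψ.toRingHom.toAlgebra
  have : FaithfulSMul A K⟦X⟧ :=
    (faithfulSMul_iff_algebraMap_injective _ _).2 (ScalesOrder.injective (φ := ψ.toRingHom) hψ)
  obtain ⟨τ, Φ, e, he, hτ, hΦ⟩ := exists_ramified_lift (A := A) (B := B) (K := K)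
  have hcomm (c : F) : Φ (algebraMap F B c) = algebraMap F K⟦X⟧ c := by
    have hψ (a : A) : algebraMap A K⟦X⟧ a = ψ a := rfl
    rw [IsScalarTower.algebraMap_apply F A B, hΦ, hψ, ψ.commutes,
      IsScalarTower.algebraMap_apply F K K⟦X⟧, τ.commutes]
  refine ⟨⟨Φ, hcomm⟩, e, he, fun g hg => ?_⟩
  calc (Φ (algebraMap A B g)).order = (τ (ψ g)).order := congrArg _ (hΦ g)
    _ = e * (ψ g).order := order_map_eq_mul (τ : K⟦X⟧ →+* K⟦X⟧) (by simpa using he) hτ _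
    _ = (e * adicOrder m g : ℕ) := by rw [hψ g hg, one_mul, Nat.cast_mul]

end Extension

end GenericArc

section AffineSpace

variable (F : Type) [Field F] (n : ℕ)

theorem mPoly_eq_idealOfVars : mPoly F n = MvPolynomial.idealOfVars (Fin n) F := by
  ext p
  rw [← pow_one (MvPolynomial.idealOfVars _ _), MvPolynomial.mem_pow_idealOfVars_iff']
  have : p ∈ mPoly F n ↔ p.coeff 0 = 0 := by
    rw [mPoly, RingHom.mem_ker, ← MvPolynomial.constantCoeff_eq]
    exact iff_of_eq (congrArg (· = 0) (MvPolynomial.aeval_zero p))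
  simp [this, Finsupp.degree_eq_zero_iff]

variable (L : Type) [CommRing L] [Algebra (MvPolynomial (Fin n) F) L] [IsSLoc F n L]

include F n in
theorem isNoetherianRing_of_isSLoc : IsNoetherianRing L :=
  IsLocalization.isNoetherianRing (mPoly F n).primeCompl L inferInstance

theorem mS_ne_top : mS F n L ≠ ⊤ :=
  have := IsLocalization.AtPrime.isLocalRing L (mPoly F n)
  (IsLocalization.AtPrime.isMaximal_map (mPoly F n) L).ne_top

theorem adicOrder_zvar (j : Fin n) : adicOrder (mS F n L) (zvar F n L j) = 1 := by
  refine adicOrder_eq_of_forall_mem_pow_iff fun i => ?_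
  have := IsLocalization.AtPrime.isLocalRing L (mPoly F n)
  rw [mS, zvar, IsLocalization.AtPrime.map_eq_maximalIdeal, ← Ideal.mem_under,
    IsLocalization.AtPrime.under_maximalIdeal_pow (mPoly F n), mPoly_eq_idealOfVars,
    MvPolynomial.X, MvPolynomial.monomial_mem_pow_idealOfVars_iff _ _ one_ne_zero]
  simp

theorem zvar_ne_zero (j : Fin n) : zvar F n L j ≠ 0 := by
  intro h
  have := adicOrder_zvar F n L j
  simp [h, adicOrder] at this

end AffineSpace

section MinPolyOf

variable {R : Type*} [CommRing R] (b : ℕ) (a : ℕ → R)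

theorem degree_sum_range_lt :
    (∑ j ∈ Finset.range (b - 1), C (a j) * X ^ j).degree < (b : WithBot ℕ) := by
  refine (degree_sum_le _ _).trans_lt ((Finset.sup_lt_iff (WithBot.bot_lt_coe b)).2 fun j hj => ?_)
  refine (degree_C_mul_X_pow_le j (a j)).trans_lt (Nat.cast_lt.2 ?_)
  exact (Finset.mem_range.1 hj).trans_le b.pred_le

theorem monic_minPolyOf : (minPolyOf b a).Monic :=
  monic_X_pow_add (degree_sum_range_lt b a)

theorem natDegree_minPolyOf [Nontrivial R] : (minPolyOf b a).natDegree = b := by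
  refine natDegree_eq_of_degree_eq_some ?_
  rw [minPolyOf, degree_add_eq_left_of_degree_lt] <;> rw [degree_X_pow]
  exact degree_sum_range_lt b a

theorem coeff_minPolyOf {j : ℕ} (hj : j < b) :
    (minPolyOf b a).coeff j = if j < b - 1 then a j else 0 := by
  simp [minPolyOf, coeff_X_pow, hj.ne]

end MinPolyOf

section Presentation

variable (P : Presentation k d S) (D : Fin d → Derivation k S S)

omit [Algebra k S] in
theorem Bc_zero_ne_zero (i : Fin P.e) : P.Bc i 0 ≠ 0 := by
  intro h
  have hb := P.hb i
  refine (P.hirr i).not_isRoot_of_natDegree_ne_one (x := 0) ?_ ?_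
  · rw [(monic_minPolyOf _ _).natDegree_map, natDegree_minPolyOf]
    omega
  · rw [IsRoot.def, ← coeff_zero_eq_eval_zero, coeff_map, coeff_minPolyOf _ _ (by omega), h]
    simp

theorem C_Bc_mul_X_pow_mem_elimAlg {i : Fin P.e} {j : ℕ} (hj : j ≤ P.b i - 2) :
    C (P.Bc i j) * X ^ (P.b i - j) ∈ elimAlg P D :=
  subset_diffClosure D _ ⟨i, j, hj, rfl⟩

theorem elimAlg_le_reesAlgebra : elimAlg P D ≤ reesAlgebra (mS k d S) := by
  refine diffClosure_le_reesAlgebra D ?_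
  rintro _ ⟨i, j, hj, rfl⟩
  exact C_mul_X_pow_mem_reesAlgebra_iff.2 (P.hmem i j hj)

theorem one_le_reesOrder_elimAlg [IsSLoc k d S] : 1 ≤ reesOrder (mS k d S) (elimAlg P D) := by
  have := isNoetherianRing_of_isSLoc k d S
  refine le_reesOrder_iff.2 fun f n hf hn => ?_
  rw [one_mul, Nat.cast_le, ← mem_pow_iff_le_adicOrder (mS_ne_top k d S) hf]
  exact C_mul_X_pow_mem_reesAlgebra_iff.1 (elimAlg_le_reesAlgebra P D hn)

variable {K : Type} [Field K] [Algebra k K] {P} {φ : BRing P →ₐ[k] PowerSeries K}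

theorem eval₂_apply_theta (φ : BRing P →ₐ[k] PowerSeries K) (i : Fin P.e) :
    (minPolyOf (P.b i) (P.Bc i)).eval₂ ((φ : BRing P →+* PowerSeries K).comp (algebraMap S _))
      (φ (theta P i)) = 0 := by
  have := congrArg (φ : BRing P →+* PowerSeries K) (P.hroot i)
  rwa [aeval_def, hom_eval₂, map_zero] at this

variable {e : ℕ} (hφ : ScalesOrder (mS k d S) e fun g => φ (algebraMap S (BRing P) g))
include hφ

theorem apply_theta_ne_zero (i : Fin P.e) : φ (theta P i) ≠ 0 := by
  intro h
  have hb := P.hb i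
  have hroot := eval₂_apply_theta φ i
  rw [h, eval₂_at_zero, coeff_minPolyOf _ _ (by omega), if_pos (by omega)] at hroot
  exact hφ.apply_ne_zero (Bc_zero_ne_zero P i) hroot

theorem le_order_apply_of_mem_elimAlg {g : S} {l : ℕ} (hg : C g * X ^ l ∈ elimAlg P D) :
    e * reesOrder (mS k d S) (elimAlg P D) * l ≤ (φ (algebraMap S (BRing P) g)).order := by
  rcases eq_or_ne g 0 with rfl | hg0
  · simp
  rw [hφ g hg0, ENat.toENNReal_coe, Nat.cast_mul, mul_assoc]
  gcongr
  exact le_reesOrder_iff.1 le_rfl g l hg0 hg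

theorem le_order_apply_theta (i : Fin P.e) :
    e * reesOrder (mS k d S) (elimAlg P D) ≤ (φ (theta P i)).order := by
  refine le_order_of_eval₂_eq_zero _ (monic_minPolyOf _ _) (eval₂_apply_theta φ i) fun j hj => ?_
  rw [natDegree_minPolyOf] at hj ⊢
  rw [coeff_minPolyOf _ _ hj]
  split_ifs with hj'
  · exact le_order_apply_of_mem_elimAlg D hφ (C_Bc_mul_X_pow_mem_elimAlg P D (by omega))
  · simp

theorem contactAlg_le_slopeSubalgebra :
    contactAlg P D φ ≤ slopeSubalgebra K (e * reesOrder (mS k d S) (elimAlg P D)) := by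
  refine Algebra.adjoin_le ?_
  rintro _ (⟨i, rfl⟩ | ⟨g, l, hg, -, rfl⟩)
  · simpa using C_mul_X_pow_mem_slopeSubalgebra_iff (n := 1).2
      (by simpa using le_order_apply_theta D hφ i)
  · exact C_mul_X_pow_mem_slopeSubalgebra_iff.2 (le_order_apply_of_mem_elimAlg D hφ hg)

theorem rOrd_mul_le {g : S} {l : ℕ} (hg0 : g ≠ 0) (hg : C g * X ^ l ∈ elimAlg P D) :
    rOrd P D φ * l ≤ e * adicOrder (mS k d S) g := by
  have hφg := hφ.apply_ne_zero hg0
  have htOrd : (tOrd (φ (algebraMap S (BRing P) g)) : ℕ∞) = _ := (coe_tOrd hφg).trans (hφ g hg0)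
  rw [← Nat.cast_mul, ← Nat.cast_inj.1 htOrd]
  exact le_reesOrder_iff.1 le_rfl _ l hφg (Algebra.subset_adjoin (.inr ⟨g, l, hg, hφg, rfl⟩))

theorem rOrd_div_eq_reesOrder_of_scalesOrder (he : e ≠ 0) :
    rOrd P D φ / e = reesOrder (mS k d S) (elimAlg P D) := by
  refine le_antisymm (le_reesOrder_iff.2 fun g l hg0 hg => ?_) ?_
  · rw [← ENNReal.mul_div_right_comm]
    exact ENNReal.div_le_of_le_mul' (rOrd_mul_le D hφ hg0 hg)
  · rw [ENNReal.le_div_iff_mul_le (by simp [he]) (by simp), mul_comm]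
    exact le_reesOrder_of_le_slopeSubalgebra (contactAlg_le_slopeSubalgebra D hφ)

variable [IsSLoc k d S]

theorem natCast_le_order_apply_theta (i : Fin P.e) : (e : ℕ∞) ≤ (φ (theta P i)).order := by
  let D : Fin d → Derivation k S S := 0
  rw [← ENat.toENNReal_le]
  calc ((e : ℕ∞) : ℝ≥0∞) = e * 1 := by simp
    _ ≤ e * reesOrder (mS k d S) (elimAlg P D) := by gcongr; exact one_le_reesOrder_elimAlg P D
    _ ≤ (φ (theta P i)).order := le_order_apply_theta D hφ i

theorem order_apply_zvar (j : Fin d) :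
    (φ (algebraMap S (BRing P) (zvar k d S j))).order = e := by
  rw [hφ _ (zvar_ne_zero k d S j), adicOrder_zvar, mul_one]

theorem natCast_le_order_apply_of_mem {s : S} (hs : s ∈ mS k d S) :
    (e : ℕ∞) ≤ (φ (algebraMap S (BRing P) s)).order := by
  rcases eq_or_ne s 0 with rfl | hs0
  · simp
  have := isNoetherianRing_of_isSLoc k d S
  rw [← pow_one (mS k d S), mem_pow_iff_le_adicOrder (mS_ne_top k d S) hs0] at hs
  rw [hφ s hs0]
  exact_mod_cast Nat.le_mul_of_pos_right e hs

theorem isArc_of_scalesOrder (he : e ≠ 0) : IsArc P φ := by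
  have hmem {f : PowerSeries K} (hf : (e : ℕ∞) ≤ f.order) : f ∈ tId K := by
    rw [← pow_one (tId K), mem_tId_pow_iff]
    exact (Nat.cast_le.2 (Nat.one_le_iff_ne_zero.2 he)).trans hf
  exact ⟨fun s hs => hmem (natCast_le_order_apply_of_mem hφ hs),
    fun i => hmem (natCast_le_order_apply_theta hφ i), apply_theta_ne_zero hφ,
    fun j => hφ.apply_ne_zero (zvar_ne_zero k d S j)⟩

theorem arcOrd_eq_of_scalesOrder (hd : 1 ≤ d) : arcOrd P φ = e := by
  have hz (j : Fin d) : tOrd (φ (algebraMap S (BRing P) (zvar k d S j))) = e := by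
    rw [← Nat.cast_inj (R := ℕ∞), coe_tOrd (hφ.apply_ne_zero (zvar_ne_zero k d S j)),
      order_apply_zvar hφ]
  have hθ (i : Fin P.e) : e ≤ tOrd (φ (theta P i)) := by
    rw [← Nat.cast_le (α := ℕ∞), coe_tOrd (apply_theta_ne_zero hφ i)]
    exact natCast_le_order_apply_theta hφ i
  refine IsLeast.csInf_eq ⟨.inr ⟨⟨0, hd⟩, hz _⟩, ?_⟩
  rintro _ (⟨i, rfl⟩ | ⟨j, rfl⟩)
  · exact hθ i
  · exact (hz j).ge

end Presentation

section ExistenceOfArc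

variable [IsScalarTower k (MvPolynomial (Fin d) k) S] [IsSLoc k d S]

theorem exists_algHom_scalesOrder (P : Presentation k d S) {K : Type*} [Field K] [IsAlgClosed K]
    [CharZero K] [Algebra k K] {a : Fin d → K} (ha : AlgebraicIndependent k a) :
    ∃ (φ : BRing P →ₐ[k] PowerSeries K) (e : ℕ), e ≠ 0 ∧
      ScalesOrder (mS k d S) e fun g => φ (algebraMap S (BRing P) g) := by
  have := P.hprime
  have := P.hfinite
  have := (faithfulSMul_iff_algebraMap_injective _ _).2 P.hinj
  obtain ⟨ψ, hψ⟩ := exists_algHom_scalesOrder_of_isLocalization (L := S) (mPoly k d) (lineArc a)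
    fun f n => by rw [mPoly_eq_idealOfVars, mem_pow_idealOfVars_iff_le_order_lineArc ha]
  exact exists_algHom_scalesOrder_of_finite ψ hψ

end ExistenceOfArc

/-- (Theorem `thm:igualdad_gral`.)  There exist a field extension `K ⊇ k` and an arc
`φ : B → K⟦t⟧` in `X` through `ξ` such that `r_{X,φ} / ord(φ) = ord(G_X^{(d)})`. -/
theorem exists_arc_normalized_contact_order_eq_elimination_order
    (k : Type) [Field k] [CharZero k] (d : ℕ) (hd : 1 ≤ d)
    (S : Type) [CommRing S] [IsDomain S] [Algebra (MvPolynomial (Fin d) k) S]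
    [Algebra k S] [IsScalarTower k (MvPolynomial (Fin d) k) S] [IsSLoc k d S]
    (D : Fin d → Derivation k S S)
    (hD : ∀ i j : Fin d, D j (zvar k d S i) = if i = j then 1 else 0)
    (P : Presentation k d S) :
    ∃ (K : Type) (_ : Field K) (_ : Algebra k K)
      (φ : BRing P →ₐ[k] PowerSeries K), IsArc P φ ∧
      rOrd P D φ / (arcOrd P φ : ℝ≥0∞) = reesOrder (mS k d S) (elimAlg P D) := by
  let R := MvPolynomial (Fin d) k
  let K := AlgebraicClosure (FractionRing R)
  have : CharZero K := charZero_of_injective_algebraMap (algebraMap k K).injective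
  have hRK : Function.Injective (algebraMap R K) := by
    rw [IsScalarTower.algebraMap_eq R (FractionRing R) K]
    exact (algebraMap (FractionRing R) K).injective.comp (IsFractionRing.injective R _)
  have ha : AlgebraicIndependent k fun j => algebraMap R K (MvPolynomial.X j) :=
    (MvPolynomial.algebraicIndependent_X (Fin d) k).map' (f := IsScalarTower.toAlgHom k R K) hRK
  obtain ⟨φ, e, he, hφ⟩ := exists_algHom_scalesOrder P ha
  refine ⟨K, inferInstance, inferInstance, φ, isArc_of_scalesOrder hφ he, ?_⟩
  rw [arcOrd_eq_of_scalesOrder hφ hd, rOrd_div_eq_reesOrder_of_scalesOrder D hφ he]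

end NashMult
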